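/- Let a ∈ ℕ be odd with a ≠ 1 and let X = cl(a^ℕ) ∈ 𝒳_2. (1) If a ∈ 1+4ℕ, then X = 1+2^{n(X)-2}ℕ₀. (2) If a ∈ 3+4ℕ, then X = (1+2^{n(X)-1}ℕ₀) ∪ (2^{n(X)-2}-1+2^{n(X)-1}ℕ₀). In both cases i(X) = 2^{n(X)-3}. -/

import Mathlib

/-!
Residue classes modulo the powers `p ^ N` form neighbourhood bases of the `p`-adic topology, so `y`
lies in `cl(a^ℕ)` if and only if `y` is congruent to a positive power of `a` modulo every `p ^ N`.
If `p ∤ u` and `p ^ m > 2`, then `1 + p ^ m * u` has order `p ^ n` modulo `p ^ (n + m)`. This is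
also the number of residues that are `1` modulo `p ^ m`, so its powers are all of these.

For `a = 1 + 2 ^ m * u` with `u` odd and `m ≥ 2` this gives `X = 1 + 2 ^ m ℕ₀`. For
`a = 2 ^ m * u - 1` it applies to `a ^ 2 = 1 + 2 ^ (m + 1) * v` with `v` odd: the even powers of `a`
are dense in the class of `1` modulo `2 ^ (m + 1)`, and the odd powers in that of `a`, which is the
class of `2 ^ m - 1`.

A union of residue classes modulo `p ^ n` has `p` times as many residues modulo `p ^ (n + 1)` as
modulo `p ^ n`. In both cases `X` is a union of exactly two residue classes modulo `2 ^ (m + 1)`, so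
`n(X) = m + 2` and `i(X) = φ(2 ^ (m + 1)) / 2 = 2 ^ (m - 1)`.
-/

open TopologicalSpace

/-- The arithmetic progression `a + bℕ₀ = {a + b*n : n ≥ 0}` inside the positive integers. -/
def golombBasic (a b : ℕ) : Set ℕ+ := {x : ℕ+ | ∃ n : ℕ, (x : ℕ) = a + b * n}

/-- The Golomb topology on the positive integers, generated by the arithmetic
progressions `a + bℕ₀` with coprime `a, b ∈ ℕ`. -/
instance golombTopology : TopologicalSpace ℕ+ :=
  generateFrom {S : Set ℕ+ | ∃ a b : ℕ, 0 < a ∧ 0 < b ∧ Nat.Coprime a b ∧ S = golombBasic a b}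

/-- The positive integers not divisible by `p` (the set `ℕ \ pℕ`). -/
abbrev Np (p : ℕ) : Type := {x : ℕ+ // ¬ p ∣ (x : ℕ)}

/-- The `p`-adic topology on `ℕ \ pℕ`, generated by the traces of the sets
`x + p^nℕ₀`, `x, n ∈ ℕ`. -/
def padicTop (p : ℕ) : TopologicalSpace (Np p) :=
  generateFrom {S : Set (Np p) | ∃ x n : ℕ, 0 < x ∧ 0 < n ∧
    S = {y : Np p | ∃ k : ℕ, ((y : ℕ+) : ℕ) = x + p ^ n * k}}

/-- Closure of a set of positive integers in the `p`-adic topology on `ℕ \ pℕ`,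
viewed again as a set of positive integers. -/
def padicClosure (p : ℕ) (A : Set ℕ+) : Set ℕ+ :=
  Subtype.val '' (@closure (Np p) (padicTop p) (Subtype.val ⁻¹' A))

/-- `a^ℕ = {a^k : k ∈ ℕ}`, the set of positive powers of `a`. -/
def powSet (a : ℕ) : Set ℕ+ := {y : ℕ+ | ∃ k : ℕ, 0 < k ∧ (y : ℕ) = a ^ k}

/-- The closure of `a^ℕ` in the `p`-adic topology on `ℕ \ pℕ`. -/
def clPow (p a : ℕ) : Set ℕ+ := padicClosure p (powSet a)

/-- The family `𝒳_p` of closures of the sets `a^ℕ` for `a ∈ ℕ \ pℕ`, `a ≠ 1`. -/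
def XX (p : ℕ) : Set (Set ℕ+) := {X | ∃ a : ℕ, 0 < a ∧ a ≠ 1 ∧ ¬ p ∣ a ∧ X = clPow p a}

/-- The projection `π_n(X)` of a set of positive integers to `ℤ/p^nℤ`. -/
def pin (p n : ℕ) (X : Set ℕ+) : Set (ZMod (p ^ n)) :=
  (fun y : ℕ+ => ((y : ℕ) : ZMod (p ^ n))) '' X

/-- `n(X)`: the least `n ∈ ℕ` with `X = ℕ ∩ π_n⁻¹(π_n(X))` and `|π_n(X)| ≥ max(p,3)`. -/
noncomputable def nX (p : ℕ) (X : Set ℕ+) : ℕ :=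
  sInf {n : ℕ | 0 < n ∧ X = {y : ℕ+ | ((y : ℕ) : ZMod (p ^ n)) ∈ pin p n X} ∧
    max p 3 ≤ (pin p n X).ncard}

/-- `i(X)`: the index of the subgroup `π_{n(X)}(X)` in the group of units of `ℤ/p^{n(X)}ℤ`. -/
noncomputable def iX (p : ℕ) (X : Set ℕ+) : ℕ :=
  Nat.card ((ZMod (p ^ nX p X))ˣ) / (pin p (nX p X) X).ncard

open Filter Topology

/-! ### Closures in the `p`-adic topology -/

section Closure

variable {p : ℕ}

lemma nhds_padicTop_hasBasis (hp : 1 < p) (y : Np p) :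
    (@nhds (Np p) (padicTop p) y).HasBasis (fun _ => True)
      (fun N : ℕ => {z : Np p | (z : ℕ) ≡ y [MOD p ^ N]}) := by
  let _ := padicTop p
  have hanti : Antitone fun N : ℕ => {z : Np p | (z : ℕ) ≡ y [MOD p ^ N]} :=
    fun _ _ hMN _ hz => hz.of_dvd (pow_dvd_pow p hMN)
  suffices hnhds : 𝓝 y = ⨅ N : ℕ, 𝓟 {z : Np p | (z : ℕ) ≡ y [MOD p ^ N]} by
    rw [hnhds]
    exact hasBasis_iInf_principal hanti.directed_ge
  -- As `y < p ^ y`, a residue class modulo `p ^ N` with `y ≤ N` has no element below `y`.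
  have hle {N : ℕ} (hN : (y : ℕ) ≤ N) {z : ℕ} (hz : z ≡ y [MOD p ^ N]) : (y : ℕ) ≤ z := by
    have hlt : (y : ℕ) < p ^ N := hN.trans_lt (Nat.lt_pow_self hp)
    calc (y : ℕ) = z % p ^ N := by rw [hz, Nat.mod_eq_of_lt hlt]
      _ ≤ z := Nat.mod_le _ _
  refine le_antisymm (le_iInf fun N => le_principal_iff.2 ?_) ?_
  · have hopen : IsOpen {z : Np p | ∃ k : ℕ, (z : ℕ) = y + p ^ (N + 1) * k} :=
      isOpen_generateFrom_of_mem ⟨y, N + 1, y.1.pos, N.succ_pos, rfl⟩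
    refine mem_of_superset (hopen.mem_nhds ⟨0, rfl⟩) ?_
    rintro z ⟨k, hk⟩
    simp [hk, Nat.ModEq, pow_succ, mul_assoc]
  · rw [show 𝓝 y = _ from nhds_generateFrom]
    refine le_iInf₂ ?_
    rintro _ ⟨hy, x, n, -, -, rfl⟩
    obtain ⟨k, hk⟩ := hy
    refine iInf_le_of_le (max n y) (principal_mono.2 fun z hz => ?_)
    obtain ⟨j, hj⟩ := (Nat.modEq_iff_dvd' (hle (le_max_right n y) hz)).1 hz.symm
    obtain ⟨q, hq⟩ := pow_dvd_pow p (le_max_left n y)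
    refine ⟨k + q * j, ?_⟩
    have := hle (le_max_right n y) hz
    calc (z : ℕ) = y + p ^ max n y * j := by omega
      _ = x + p ^ n * (k + q * j) := by rw [hq, hk]; ring

lemma mem_padicClosure_iff (hp : 1 < p) {A : Set ℕ+} {y : ℕ+} :
    y ∈ padicClosure p A ↔ ¬ p ∣ y ∧ ∀ N : ℕ, ∃ x ∈ A, (x : ℕ) ≡ y [MOD p ^ N] := by
  let _ := padicTop p
  have hcl (hy : ¬ p ∣ (y : ℕ)) := mem_closure_iff_nhds_basis (nhds_padicTop_hasBasis hp ⟨y, hy⟩)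
    (t := Subtype.val ⁻¹' A)
  constructor
  · rintro ⟨⟨y, hy⟩, hmem, rfl⟩
    refine ⟨hy, fun N => ?_⟩
    obtain ⟨x, hxA, hx⟩ := (hcl hy).1 hmem N trivial
    exact ⟨x, hxA, hx⟩
  · rintro ⟨hy, h⟩
    refine ⟨⟨y, hy⟩, (hcl hy).2 fun N _ => ?_, rfl⟩
    obtain ⟨x, hxA, hx⟩ := h (N + 1)
    have hpx : ¬ p ∣ (x : ℕ) := by rwa [hx.dvd_iff (dvd_pow_self p N.succ_ne_zero)]
    exact ⟨⟨x, hpx⟩, hxA, hx.of_dvd (pow_dvd_pow p N.le_succ)⟩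

lemma mem_clPow_iff (hp : p.Prime) {a : ℕ} (ha : ¬ p ∣ a) {y : ℕ+} :
    y ∈ clPow p a ↔ ∀ N : ℕ, ∃ k : ℕ, 0 < k ∧ a ^ k ≡ y [MOD p ^ N] := by
  have ha0 : 0 < a := Nat.pos_of_ne_zero fun h => ha (h ▸ dvd_zero p)
  rw [clPow, mem_padicClosure_iff hp.one_lt]
  constructor
  · rintro ⟨-, h⟩ N
    obtain ⟨x, ⟨k, hk, hxk⟩, hx⟩ := h N
    exact ⟨k, hk, hxk ▸ hx⟩
  · intro h
    refine ⟨fun hy => ?_, fun N => ?_⟩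
    · obtain ⟨k, -, hk⟩ := h 1
      exact ha (hp.dvd_of_dvd_pow ((hk.dvd_iff (dvd_pow_self p one_ne_zero)).2 hy))
    · obtain ⟨k, hk, hak⟩ := h N
      exact ⟨⟨a ^ k, pow_pos ha0 k⟩, ⟨k, hk, rfl⟩, hak⟩

end Closure

/-! ### Powers of `1 + p ^ m * u` -/

section Powers

lemma exists_eq_pow_mul_of_pow_dvd {p k n : ℕ} (hp : 1 < p) (hn : n ≠ 0) (h : p ^ k ∣ n) :
    ∃ m u : ℕ, k ≤ m ∧ ¬ p ∣ u ∧ n = p ^ m * u := by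
  have hfin : FiniteMultiplicity p n :=
    Nat.finiteMultiplicity_iff.2 ⟨hp.ne', Nat.pos_of_ne_zero hn⟩
  obtain ⟨u, hnu, hu⟩ := hfin.exists_eq_pow_mul_and_not_dvd
  exact ⟨multiplicity p n, u, hfin.le_multiplicity_of_pow_dvd h, hu, hnu⟩

lemma ncard_powers {M : Type*} [Monoid M] {x : M} (hx : IsOfFinOrder x) :
    (Submonoid.powers x : Set M).ncard = orderOf x :=
  (Nat.card_congr (finEquivPowers hx).symm).trans (Nat.card_fin _)

lemma ncard_preimage_of_surjective {G H : Type*} [AddGroup G] [AddGroup H] (f : G →+ H)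
    (hf : Function.Surjective f) (S : Set H) :
    (f ⁻¹' S).ncard = Nat.card f.ker * S.ncard := by
  let e := QuotientAddGroup.quotientKerEquivOfSurjective f hf
  calc (f ⁻¹' S).ncard = Nat.card (QuotientAddGroup.mk (s := f.ker) ⁻¹' (e ⁻¹' S)) := rfl
    _ = Nat.card f.ker * Nat.card (e ⁻¹' S) := by
      rw [← Nat.card_prod]
      exact Nat.card_congr (QuotientAddGroup.preimageMkEquivAddSubgroupProdSet f.ker (e ⁻¹' S))
    _ = Nat.card f.ker * S.ncard := by
      rw [Nat.card_preimage_of_injective e.injective (by simp [e.surjective.range_eq]),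
        Nat.card_coe_set_eq]

lemma ncard_preimage_castHom {m n : ℕ} [NeZero m] (h : m ∣ n) (S : Set (ZMod m)) :
    (ZMod.castHom h (ZMod m) ⁻¹' S).ncard = n / m * S.ncard := by
  have hcard := ncard_preimage_of_surjective (ZMod.castHom h (ZMod m)).toAddMonoidHom
    (ZMod.castHom_surjective h)
  have hker : n / m = Nat.card (ZMod.castHom h (ZMod m)).toAddMonoidHom.ker := by
    refine Nat.div_eq_of_eq_mul_left (NeZero.pos m) ?_
    simpa [Set.ncard_univ] using hcard Set.univ
  rw [hker]
  exact hcard S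

variable {p m : ℕ}

lemma powers_one_add_mul_prime_pow (hp : p.Prime) (hm : m ≠ 0) (hpm : m + 2 ≤ p * m)
    {u : ℤ} (hu : ¬ (p : ℤ) ∣ u) (n : ℕ) :
    (Submonoid.powers (1 + p ^ m * u : ZMod (p ^ (n + m))) : Set (ZMod (p ^ (n + m)))) =
      ZMod.castHom (pow_dvd_pow p (Nat.le_add_left m n)) (ZMod (p ^ m)) ⁻¹' {1} := by
  have : NeZero p := ⟨hp.ne_zero⟩
  have horder := ZMod.orderOf_one_add_mul_prime_pow hp m hm hpm u hu n
  refine Set.eq_of_subset_of_ncard_le ?_ (le_of_eq ?_)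
  · rintro _ ⟨k, rfl⟩
    have hpow : (p : ZMod (p ^ m)) ^ m = 0 := by rw [← Nat.cast_pow, ZMod.natCast_self]
    rw [Set.mem_preimage, Set.mem_singleton_iff]
    simp only [map_pow, map_add, map_one, map_mul, map_natCast, hpow, zero_mul, add_zero, one_pow]
  · have hfin := orderOf_pos_iff.1 (horder ▸ pow_pos hp.pos n)
    rw [ncard_powers hfin, horder, ncard_preimage_castHom, Set.ncard_singleton, mul_one, pow_add,
      Nat.mul_div_cancel _ (pow_pos hp.pos m)]

lemma exists_one_add_mul_prime_pow_pow_modEq (hp : p.Prime) (hm : m ≠ 0) (hpm : m + 2 ≤ p * m)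
    {u y : ℕ} (hu : ¬ p ∣ u) (hy : y ≡ 1 [MOD p ^ m]) (N : ℕ) :
    ∃ k : ℕ, 0 < k ∧ (1 + p ^ m * u) ^ k ≡ y [MOD p ^ N] := by
  have hmem : (y : ZMod (p ^ (N + m))) ∈
      Submonoid.powers (1 + p ^ m * (u : ℤ) : ZMod (p ^ (N + m))) := by
    rw [← SetLike.mem_coe,
      powers_one_add_mul_prime_pow hp hm hpm (by rwa [Int.natCast_dvd_natCast])]
    simpa using (ZMod.natCast_eq_natCast_iff _ _ _).2 hy
  have horder := ZMod.orderOf_one_add_mul_prime_pow hp m hm hpm u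
    (by rwa [Int.natCast_dvd_natCast]) N
  obtain ⟨k, hk⟩ := hmem
  refine ⟨k + p ^ N, Nat.add_pos_right k (pow_pos hp.pos N), ?_⟩
  refine Nat.ModEq.of_dvd (pow_dvd_pow p (Nat.le_add_right N m)) ?_
  rw [← ZMod.natCast_eq_natCast_iff, ← hk, ← horder]
  simp [pow_add, pow_orderOf_eq_one]

end Powers

/-! ### The closures of the sets of powers -/

section ClPow

variable {p m : ℕ}

lemma mem_golombBasic_iff {c d : ℕ} (hcd : c ≤ d) {y : ℕ+} :
    y ∈ golombBasic c d ↔ y ≡ c [MOD d] := by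
  constructor
  · rintro ⟨n, hn⟩
    simp [Nat.ModEq, hn]
  · intro h
    have hcy : c ≤ y := by
      by_contra! hlt
      have hdvd : d ∣ c - y := (Nat.modEq_iff_dvd' hlt.le).1 h
      have := Nat.le_of_dvd (Nat.sub_pos_of_lt hlt) hdvd
      have := y.pos
      omega
    obtain ⟨n, hn⟩ := (Nat.modEq_iff_dvd' hcy).1 h.symm
    exact ⟨n, by omega⟩

lemma not_dvd_one_add_pow_mul (hp : p ≠ 1) (hm : m ≠ 0) (u : ℕ) : ¬ p ∣ 1 + p ^ m * u := by
  rwa [← Nat.dvd_add_iff_left ((dvd_pow_self p hm).mul_right u), Nat.dvd_one]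

lemma clPow_one_add_mul_prime_pow (hp : p.Prime) (hm : m ≠ 0) (hpm : m + 2 ≤ p * m) {u : ℕ}
    (hu : ¬ p ∣ u) : clPow p (1 + p ^ m * u) = golombBasic 1 (p ^ m) := by
  ext y
  rw [mem_clPow_iff hp (not_dvd_one_add_pow_mul hp.ne_one hm u),
    mem_golombBasic_iff (Nat.one_le_pow _ _ hp.pos)]
  refine ⟨fun h => ?_, exists_one_add_mul_prime_pow_pow_modEq hp hm hpm hu⟩
  obtain ⟨k, -, hk⟩ := h m
  have hone : 1 + p ^ m * u ≡ 1 [MOD p ^ m] := by simp [Nat.ModEq]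
  simpa using hk.symm.trans (hone.pow k)

lemma mem_clPow_iff_of_sq_eq (hp : p.Prime) (hm : m ≠ 0) (hpm : m + 2 ≤ p * m) {a u : ℕ}
    (hu : ¬ p ∣ u) (ha : a ^ 2 = 1 + p ^ m * u) {y : ℕ+} :
    y ∈ clPow p a ↔ y ≡ 1 [MOD p ^ m] ∨ y ≡ a [MOD p ^ m] := by
  have hpa : ¬ p ∣ a := fun h =>
    not_dvd_one_add_pow_mul hp.ne_one hm u (ha ▸ dvd_pow h two_ne_zero)
  have hsq : a ^ 2 ≡ 1 [MOD p ^ m] := by simp [ha, Nat.ModEq]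
  have hdense {x : ℕ} (hx : x ≡ 1 [MOD p ^ m]) (N : ℕ) :
      ∃ k, 0 < k ∧ a ^ (2 * k) ≡ x [MOD p ^ N] := by
    simpa only [pow_mul, ha] using exists_one_add_mul_prime_pow_pow_modEq hp hm hpm hu hx N
  rw [mem_clPow_iff hp hpa]
  constructor
  · intro h
    obtain ⟨k, -, hk⟩ := h m
    have heven (t : ℕ) : a ^ (2 * t) ≡ 1 [MOD p ^ m] := by simpa [pow_mul] using hsq.pow t
    obtain ⟨t, rfl | rfl⟩ := Nat.even_or_odd' k
    · exact .inl (hk.symm.trans (heven t))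
    · exact .inr (hk.symm.trans (by simpa [pow_succ] using (heven t).mul_right a))
  · rintro (hy | hy) N
    · obtain ⟨k, hk, hak⟩ := hdense hy N
      exact ⟨2 * k, by positivity, hak⟩
    · -- Approximate `a * y ≡ a ^ 2 ≡ 1` by an even power of `a` and cancel one factor `a`.
      have hay : a * y ≡ 1 [MOD p ^ m] := by
        simpa [← sq] using (hy.mul_left a).trans (by simpa [← sq] using hsq)
      obtain ⟨k, hk, hak⟩ := hdense hay N
      have hcop : Nat.gcd (p ^ N) a = 1 := ((hp.coprime_iff_not_dvd.2 hpa).pow_left N)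
      refine ⟨2 * k - 1, by omega, Nat.ModEq.cancel_left_of_coprime hcop ?_⟩
      rwa [← pow_succ', Nat.sub_add_cancel (by omega)]

lemma clPow_two_of_add_one_eq (hm : 2 ≤ m) {a u : ℕ} (hu : ¬ 2 ∣ u) (ha : a + 1 = 2 ^ m * u) :
    clPow 2 a = golombBasic 1 (2 ^ (m + 1)) ∪ golombBasic (2 ^ m - 1) (2 ^ (m + 1)) := by
  have huodd : Odd u := Nat.not_even_iff_odd.1 (mt Even.two_dvd hu)
  obtain ⟨k, rfl⟩ := Nat.exists_eq_add_of_le' hm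
  -- With `a = 2 * c + 1`, the factor `c + 1` of `a ^ 2 = 1 + 4 * c * (c + 1)` is `2 ^ (m - 1) * u`.
  obtain ⟨c, rfl⟩ : Odd a := by grind
  have hc : c + 1 = 2 ^ (k + 1) * u := by grind
  have hcodd : Odd c := by grind
  have hsq : (2 * c + 1) ^ 2 = 1 + 2 ^ (k + 2 + 1) * (u * c) := by
    linear_combination 4 * c * hc
  have hmod : 2 * c + 1 ≡ 2 ^ (k + 2) - 1 [MOD 2 ^ (k + 2 + 1)] := by
    obtain ⟨q, rfl⟩ := huodd
    refine Nat.ModEq.add_right_cancel' 1 ?_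
    rw [ha, Nat.sub_add_cancel Nat.one_le_two_pow]
    have hsplit : 2 ^ (k + 2) * (2 * q + 1) = 2 ^ (k + 2) + 2 ^ (k + 2 + 1) * q := by ring
    simp [hsplit, Nat.ModEq]
  ext y
  rw [mem_clPow_iff_of_sq_eq Nat.prime_two (by omega) (by omega)
      (huodd.mul hcodd).not_two_dvd_nat hsq,
    Set.mem_union, mem_golombBasic_iff Nat.one_le_two_pow, mem_golombBasic_iff (by grind)]
  exact or_congr_right ⟨fun h => h.trans hmod, fun h => h.trans hmod.symm⟩

end ClPow

/-! ### The invariants `n(X)` and `i(X)` -/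

/-- `X = ℕ ∩ π_n⁻¹(π_n(X))`: the set `X` is a union of residue classes modulo `p ^ n`. -/
def IsSaturatedAt (p n : ℕ) (X : Set ℕ+) : Prop :=
  X = {y : ℕ+ | ((y : ℕ) : ZMod (p ^ n)) ∈ pin p n X}

section Invariants

variable {p m n : ℕ} {X Y : Set ℕ+}

lemma isSaturatedAt_iff :
    IsSaturatedAt p n X ↔ ∀ ⦃x y : ℕ+⦄, x ∈ X → (x : ℕ) ≡ y [MOD p ^ n] → y ∈ X := by
  simp only [← ZMod.natCast_eq_natCast_iff]
  constructor
  · intro h x y hx hxy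
    rw [h]
    exact ⟨x, hx, hxy⟩
  · intro h
    refine Set.Subset.antisymm (fun y hy => ⟨y, hy, rfl⟩) ?_
    rintro y ⟨x, hx, hxy⟩
    exact h hx hxy

lemma IsSaturatedAt.mono (hX : IsSaturatedAt p m X) (hmn : m ≤ n) : IsSaturatedAt p n X :=
  isSaturatedAt_iff.2 fun _ _ hx hxy =>
    isSaturatedAt_iff.1 hX hx (hxy.of_dvd (pow_dvd_pow p hmn))

lemma IsSaturatedAt.union (hX : IsSaturatedAt p n X) (hY : IsSaturatedAt p n Y) :
    IsSaturatedAt p n (X ∪ Y) :=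
  isSaturatedAt_iff.2 fun _ _ h hxy =>
    h.imp (isSaturatedAt_iff.1 hX · hxy) (isSaturatedAt_iff.1 hY · hxy)

lemma isSaturatedAt_golombBasic {c : ℕ} (hc : c ≤ p ^ n) :
    IsSaturatedAt p n (golombBasic c (p ^ n)) := by
  simp only [isSaturatedAt_iff, mem_golombBasic_iff hc]
  exact fun _ _ hx hxy => hxy.symm.trans hx

lemma pin_golombBasic [NeZero p] (c : ℕ) :
    pin p n (golombBasic c (p ^ n)) = {(c : ZMod (p ^ n))} := by
  refine (Set.Nonempty.subset_singleton_iff ?_).1 ?_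
  · exact ⟨_, ⟨⟨c + p ^ n, Nat.add_pos_right c (NeZero.pos _)⟩, ⟨1, by simp⟩, rfl⟩⟩
  · rintro _ ⟨y, ⟨k, hk⟩, rfl⟩
    simp [hk]

lemma castHom_image_pin (hmn : m ≤ n) :
    ZMod.castHom (pow_dvd_pow p hmn) (ZMod (p ^ m)) '' pin p n X = pin p m X := by
  simp [pin, Set.image_image]

lemma ncard_pin_mono [NeZero p] (hmn : m ≤ n) : (pin p m X).ncard ≤ (pin p n X).ncard := by
  rw [← castHom_image_pin hmn]
  exact Set.ncard_image_le (Set.toFinite _)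

lemma IsSaturatedAt.preimage_castHom_pin [NeZero p] (hX : IsSaturatedAt p m X) (hmn : m ≤ n) :
    ZMod.castHom (pow_dvd_pow p hmn) (ZMod (p ^ m)) ⁻¹' pin p m X = pin p n X := by
  refine Set.Subset.antisymm (fun z hz => ?_) ?_
  · obtain ⟨y, rfl⟩ : ∃ y : ℕ+, ((y : ℕ) : ZMod (p ^ n)) = z :=
      ⟨⟨z.val + p ^ n, Nat.add_pos_right _ (NeZero.pos _)⟩, by simp⟩
    refine ⟨y, ?_, rfl⟩
    rw [hX]
    simpa using hz
  · rw [← Set.image_subset_iff, castHom_image_pin hmn]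

lemma IsSaturatedAt.ncard_pin_succ [NeZero p] (hX : IsSaturatedAt p n X) :
    (pin p (n + 1) X).ncard = p * (pin p n X).ncard := by
  rw [← hX.preimage_castHom_pin n.le_succ, ncard_preimage_castHom, pow_succ,
    Nat.mul_div_cancel_left _ (NeZero.pos (p ^ n))]

lemma IsSaturatedAt.nX_eq_succ [NeZero p] (hX : IsSaturatedAt p n X)
    (hlt : (pin p n X).ncard < max p 3) (hle : max p 3 ≤ p * (pin p n X).ncard) :
    nX p X = n + 1 := by
  refine IsLeast.csInf_eq ⟨⟨n.succ_pos, hX.mono n.le_succ, hX.ncard_pin_succ ▸ hle⟩, ?_⟩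
  rintro k ⟨-, -, hk⟩
  by_contra! hkn
  exact (hk.trans (ncard_pin_mono (Nat.lt_succ_iff.1 hkn))).not_gt hlt

lemma IsSaturatedAt.iX_eq (hp : p.Prime) (hn : n ≠ 0) (hX : IsSaturatedAt p n X)
    (hnX : nX p X = n + 1) : iX p X = Nat.totient (p ^ n) / (pin p n X).ncard := by
  have : NeZero p := ⟨hp.ne_zero⟩
  rw [iX, hnX, Nat.card_eq_fintype_card, ZMod.card_units_eq_totient, hX.ncard_pin_succ, pow_succ',
    Nat.totient_mul_of_prime_of_dvd hp (dvd_pow_self p hn), Nat.mul_div_mul_left _ _ hp.pos]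

lemma IsSaturatedAt.nX_iX_two_of_ncard_pin_eq_two (hn : 2 ≤ n) (hX : IsSaturatedAt 2 n X)
    (hcard : (pin 2 n X).ncard = 2) : nX 2 X = n + 1 ∧ iX 2 X = 2 ^ (n - 2) := by
  have hnX : nX 2 X = n + 1 := hX.nX_eq_succ (by simp [hcard]) (by simp [hcard])
  refine ⟨hnX, ?_⟩
  obtain ⟨k, rfl⟩ := Nat.exists_eq_add_of_le' hn
  rw [hX.iX_eq Nat.prime_two (by omega) hnX, hcard, Nat.totient_prime_pow_succ Nat.prime_two]
  simp [pow_succ]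

lemma nX_iX_golombBasic_one_two_pow (hm : m ≠ 0) :
    nX 2 (golombBasic 1 (2 ^ m)) = m + 2 ∧ iX 2 (golombBasic 1 (2 ^ m)) = 2 ^ (m - 1) := by
  have hX : IsSaturatedAt 2 m (golombBasic 1 (2 ^ m)) :=
    isSaturatedAt_golombBasic Nat.one_le_two_pow
  refine (hX.mono m.le_succ).nX_iX_two_of_ncard_pin_eq_two (by omega) ?_
  rw [hX.ncard_pin_succ, pin_golombBasic, Set.ncard_singleton]

lemma nX_iX_golombBasic_union_two_pow (hm : 2 ≤ m) :
    nX 2 (golombBasic 1 (2 ^ (m + 1)) ∪ golombBasic (2 ^ m - 1) (2 ^ (m + 1))) = m + 2 ∧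
      iX 2 (golombBasic 1 (2 ^ (m + 1)) ∪ golombBasic (2 ^ m - 1) (2 ^ (m + 1))) =
        2 ^ (m - 1) := by
  have : 2 ^ (m + 1) = 2 * 2 ^ m := pow_succ' 2 m
  have : 2 ^ 2 ≤ 2 ^ m := Nat.pow_le_pow_right two_pos hm
  refine ((isSaturatedAt_golombBasic Nat.one_le_two_pow).union
    (isSaturatedAt_golombBasic (by omega))).nX_iX_two_of_ncard_pin_eq_two (by omega) ?_
  rw [pin, Set.image_union, ← pin, ← pin, pin_golombBasic, pin_golombBasic, Set.singleton_union]
  refine Set.ncard_pair fun h => ?_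
  have hmod := (ZMod.natCast_eq_natCast_iff _ _ _).1 h
  have := hmod.eq_of_lt_of_lt (by omega) (by omega)
  omega

end Invariants

/-- Structure of the elements `X = cl(a^ℕ)` of `𝒳_2`: if `a ≡ 1 (mod 4)` then
`X = 1 + 2^{n(X)-2}ℕ₀`; if `a ≡ 3 (mod 4)` then
`X = (1 + 2^{n(X)-1}ℕ₀) ∪ (2^{n(X)-2} - 1 + 2^{n(X)-1}ℕ₀)`; in both cases
`i(X) = 2^{n(X)-3}`. -/
theorem XX_two_structure (a : ℕ) (ha : 0 < a) (ha1 : a ≠ 1) (hodd : ¬ 2 ∣ a) :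
    (a % 4 = 1 → clPow 2 a = golombBasic 1 (2 ^ (nX 2 (clPow 2 a) - 2))) ∧
    (a % 4 = 3 → clPow 2 a =
      golombBasic 1 (2 ^ (nX 2 (clPow 2 a) - 1)) ∪
      golombBasic (2 ^ (nX 2 (clPow 2 a) - 2) - 1) (2 ^ (nX 2 (clPow 2 a) - 1))) ∧
    iX 2 (clPow 2 a) = 2 ^ (nX 2 (clPow 2 a) - 3) := by
  obtain h1 | h3 : a % 4 = 1 ∨ a % 4 = 3 := by omega
  · obtain ⟨m, u, hm, hu, hau⟩ : ∃ m u : ℕ, 2 ≤ m ∧ ¬ 2 ∣ u ∧ a - 1 = 2 ^ m * u :=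
      exists_eq_pow_mul_of_pow_dvd one_lt_two (by omega) (by omega)
    have hX : clPow 2 a = golombBasic 1 (2 ^ m) := by
      rw [show a = 1 + 2 ^ m * u by omega]
      exact clPow_one_add_mul_prime_pow Nat.prime_two (by omega) (by omega) hu
    obtain ⟨hn, hi⟩ := nX_iX_golombBasic_one_two_pow (m := m) (by omega)
    rw [hX, hn, hi]
    exact ⟨fun _ => rfl, fun h3 => by omega, rfl⟩
  · obtain ⟨m, u, hm, hu, hau⟩ : ∃ m u : ℕ, 2 ≤ m ∧ ¬ 2 ∣ u ∧ a + 1 = 2 ^ m * u :=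
      exists_eq_pow_mul_of_pow_dvd one_lt_two (by omega) (by omega)
    obtain ⟨hn, hi⟩ := nX_iX_golombBasic_union_two_pow hm
    rw [clPow_two_of_add_one_eq hm hu hau, hn, hi]
    exact ⟨fun h1 => by omega, fun _ => rfl, rfl⟩
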